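/- Suppose each A_i(t) is upper triangular and the Liao-type exponent satisfies χ < 0 for some Δ-sequence {n_s}. Then there exists a constant δ > 0 such that, whenever the perturbations satisfy ‖F_i(t,x)‖ ≤ L‖x‖ for all i ∈ I, t > 0, x ∈ ℝ^d with 0 ≤ L < δ, every solution x(t) of the switched quasi-linear system ẋ(t) = A_{u(t)}(t)x(t) + F_{u(t)}(t,x(t)) satisfies limsup_{t→∞} (1/t)·log‖x(t)‖ < 0; i.e., the system is globally asymptotically exponentially stable. -/

import Mathlib

/-- Matrix acting on `EuclideanSpace ℝ (Fin d)` by matrix-vector multiplication. -/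
noncomputable def mulVecE {d : ℕ} (M : Matrix (Fin d) (Fin d) ℝ)
    (v : EuclideanSpace ℝ (Fin d)) : EuclideanSpace ℝ (Fin d) :=
  (EuclideanSpace.equiv (Fin d) ℝ).symm (M.mulVec (EuclideanSpace.equiv (Fin d) ℝ v))

section

open MeasureTheory Set Filter

lemma mulVecE_apply {d : ℕ} (M : Matrix (Fin d) (Fin d) ℝ) (v : EuclideanSpace ℝ (Fin d))
    (j : Fin d) : mulVecE M v j = ∑ k, M j k * v k := rfl

lemma abs_entry_le_of_norm_mulVecE_le {d : ℕ} {M : Matrix (Fin d) (Fin d) ℝ} {α : ℝ}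
    (h : ∀ v : EuclideanSpace ℝ (Fin d), ‖mulVecE M v‖ ≤ α * ‖v‖) (j k : Fin d) :
    |M j k| ≤ α := by
  have h1 := h (EuclideanSpace.single k 1)
  have h2 := PiLp.norm_apply_le (mulVecE M (EuclideanSpace.single k 1)) j
  rw [mulVecE_apply] at h2
  simpa [Pi.single_apply] using h2.trans h1

/-- A continuous function whose derivative is nonpositive away from the terms of a strictly
increasing sequence is antitone. -/
lemma antitoneOn_Icc_of_hasDerivAt_nonpos_off_seq {τ : ℕ → ℝ} (hτ : StrictMono τ) {m n : ℕ}
    (hmn : m ≤ n) {f : ℝ → ℝ} (hf : ContinuousOn f (Icc (τ m) (τ n)))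
    (h : ∀ t ∈ Ioo (τ m) (τ n), (∀ k, t ≠ τ k) → ∃ f', HasDerivAt f f' t ∧ f' ≤ 0) :
    AntitoneOn f (Icc (τ m) (τ n)) := by
  induction n, hmn using Nat.le_induction with
  | base => simp
  | succ n hmn ih =>
    have hle : τ m ≤ τ n := hτ.monotone hmn
    have hlt : τ n < τ (n + 1) := hτ n.lt_succ_self
    have h1 := ih (hf.mono (Icc_subset_Icc_right hlt.le))
      (fun t ht => h t ⟨ht.1, ht.2.trans hlt⟩)
    have hD : ∀ t ∈ interior (Icc (τ n) (τ (n + 1))), ∃ f', HasDerivAt f f' t ∧ f' ≤ 0 := by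
      intro t ht
      rw [interior_Icc] at ht
      refine h t ⟨hle.trans_lt ht.1, ht.2⟩ ?_
      rintro k rfl
      have h3 := hτ.lt_iff_lt.1 ht.1
      have h4 := hτ.lt_iff_lt.1 ht.2
      omega
    have h2 : AntitoneOn f (Icc (τ n) (τ (n + 1))) := by
      refine antitoneOn_of_deriv_nonpos (convex_Icc _ _)
        (hf.mono (Icc_subset_Icc_left hle)) ?_ ?_
      · intro t ht
        obtain ⟨f', hf', -⟩ := hD t ht
        exact hf'.differentiableAt.differentiableWithinAt
      · intro t ht
        obtain ⟨f', hf', h0⟩ := hD t ht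
        rwa [hf'.deriv]
    rw [← Icc_union_Icc_eq_Icc hle hlt.le]
    exact h1.union_right h2 (isGreatest_Icc hle) (isLeast_Icc hlt.le)

/-- Rate bound for the weighted coordinates `R ^ j * exp (-p j) * x j`: up to the diagonal part,
an upper triangular linear field with a small perturbation grows slowly. -/
lemma weighted_rate_le {d : ℕ} {M : Matrix (Fin d) (Fin d) ℝ} {α c R L : ℝ}
    (hM : M.BlockTriangular (id : Fin d → Fin d)) (hα : ∀ j k, |M j k| ≤ α) (hR : 1 ≤ R)
    (hL : 0 ≤ L) {x g : EuclideanSpace ℝ (Fin d)} {p : Fin d → ℝ} (hp : ∀ j, |p j| ≤ c)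
    (hg : ‖g‖ ≤ L * ‖x‖) :
    ∑ j : Fin d, 2 * (R ^ (j : ℕ) * Real.exp (-p j) * x j) *
        (R ^ (j : ℕ) * Real.exp (-p j) * ((∑ k, M j k * x k) + g j - M j j * x j))
      ≤ 2 * (d * Real.exp (2 * c) * (d * α / R + R ^ d * L)) *
        ∑ j : Fin d, (R ^ (j : ℕ) * Real.exp (-p j) * x j) ^ 2 := by
  have hR0 : 0 < R := by linarith
  set S := ∑ j : Fin d, (R ^ (j : ℕ) * Real.exp (-p j) * x j) ^ 2 with hS
  have hS0 : 0 ≤ S := Finset.sum_nonneg fun j _ => sq_nonneg _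
  set N := √S with hN
  have hN0 : 0 ≤ N := Real.sqrt_nonneg _
  have hNS : N * N = S := Real.mul_self_sqrt hS0
  have hv : ∀ k : Fin d, R ^ (k : ℕ) * Real.exp (-p k) * |x k| ≤ N := by
    intro k
    have h1 : |R ^ (k : ℕ) * Real.exp (-p k) * x k| ≤ N := by
      refine Real.abs_le_sqrt ?_
      exact Finset.single_le_sum (f := fun k : Fin d => (R ^ (k : ℕ) * Real.exp (-p k) * x k) ^ 2)
        (fun j _ => sq_nonneg _) (Finset.mem_univ k)
    rwa [abs_mul, abs_of_pos (by positivity)] at h1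
  have hpow : ∀ k : Fin d, R ^ (k : ℕ) ≤ R ^ d := fun k => pow_le_pow_right₀ hR k.2.le
  have hexp : ∀ k, Real.exp (-p k) ≤ Real.exp c := fun k =>
    Real.exp_le_exp.2 (by linarith [(abs_le.1 (hp k)).1])
  have hexp' : ∀ j k, Real.exp (-p j) ≤ Real.exp (2 * c) * Real.exp (-p k) := fun j k => by
    rw [← Real.exp_add]
    exact Real.exp_le_exp.2 (by linarith [(abs_le.1 (hp j)).1, (abs_le.1 (hp k)).2])
  have hcc : Real.exp (2 * c) = Real.exp c * Real.exp c := by rw [← Real.exp_add]; ring_nf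
  have hx : ‖x‖ ≤ Real.exp c * N := by
    refine abs_le_of_sq_le_sq' ?_ (by positivity) |>.2
    rw [EuclideanSpace.real_norm_sq_eq, mul_pow, pow_two N, hNS, hS, Finset.mul_sum]
    refine Finset.sum_le_sum fun k _ => ?_
    rw [← mul_pow]
    refine sq_le_sq.2 ?_
    rw [abs_mul, abs_mul (R ^ (k : ℕ) * _), ← mul_assoc, abs_of_pos (Real.exp_pos c),
      abs_of_pos (by positivity : 0 < R ^ (k : ℕ) * Real.exp (-p k))]
    refine le_mul_of_one_le_left (abs_nonneg _) ?_
    have h1 : 1 ≤ R ^ (k : ℕ) := one_le_pow₀ hR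
    have h2 : 1 ≤ Real.exp c * Real.exp (-p k) := by
      rw [← Real.exp_add]
      exact Real.one_le_exp (by linarith [(abs_le.1 (hp k)).2])
    nlinarith
  have hrate : ∀ j : Fin d,
      |R ^ (j : ℕ) * Real.exp (-p j) * ((∑ k, M j k * x k) + g j - M j j * x j)|
        ≤ Real.exp (2 * c) * (d * α / R + R ^ d * L) * N := by
    intro j
    have hα0 : 0 ≤ α := (abs_nonneg _).trans (hα j j)
    have hw : 0 < R ^ (j : ℕ) * Real.exp (-p j) := by positivity
    have e1 : (∑ k, M j k * x k) + g j - M j j * x j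
        = (∑ k ∈ Finset.univ.erase j, M j k * x k) + g j := by
      rw [← Finset.add_sum_erase _ _ (Finset.mem_univ j)]; ring
    have hterm : ∀ k ∈ Finset.univ.erase j,
        R ^ (j : ℕ) * Real.exp (-p j) * |M j k * x k| ≤ Real.exp (2 * c) * (α / R) * N := by
      intro k hk
      rcases lt_or_gt_of_ne (Finset.ne_of_mem_erase hk) with hkj | hjk
      · rw [hM hkj]; simp; positivity
      · have h1 : R * R ^ (j : ℕ) ≤ R ^ (k : ℕ) := by
          rw [← pow_succ']; exact pow_le_pow_right₀ hR hjk
        have h2 : R * (R ^ (j : ℕ) * Real.exp (-p j) * |x k|) ≤ Real.exp (2 * c) * N := by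
          calc R * (R ^ (j : ℕ) * Real.exp (-p j) * |x k|)
              = (R * R ^ (j : ℕ)) * Real.exp (-p j) * |x k| := by ring
            _ ≤ R ^ (k : ℕ) * (Real.exp (2 * c) * Real.exp (-p k)) * |x k| := by
              gcongr; exact hexp' j k
            _ = Real.exp (2 * c) * (R ^ (k : ℕ) * Real.exp (-p k) * |x k|) := by ring
            _ ≤ _ := by gcongr; exact hv k
        have h3 : R ^ (j : ℕ) * Real.exp (-p j) * |x k| ≤ Real.exp (2 * c) * N / R := by
          rw [le_div_iff₀ hR0]; linarith
        calc R ^ (j : ℕ) * Real.exp (-p j) * |M j k * x k|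
            = |M j k| * (R ^ (j : ℕ) * Real.exp (-p j) * |x k|) := by rw [abs_mul]; ring
          _ ≤ α * (Real.exp (2 * c) * N / R) := by gcongr; exact hα j k
          _ = _ := by ring
    rw [e1, abs_mul, abs_of_pos hw]
    have hgj : |g j| ≤ L * (Real.exp c * N) :=
      (PiLp.norm_apply_le g j).trans (hg.trans (by gcongr))
    calc R ^ (j : ℕ) * Real.exp (-p j) * |(∑ k ∈ Finset.univ.erase j, M j k * x k) + g j|
        ≤ R ^ (j : ℕ) * Real.exp (-p j) *
            ((∑ k ∈ Finset.univ.erase j, |M j k * x k|) + |g j|) := by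
          gcongr
          exact (abs_add_le _ _).trans (by gcongr; exact Finset.abs_sum_le_sum_abs _ _)
      _ = (∑ k ∈ Finset.univ.erase j, R ^ (j : ℕ) * Real.exp (-p j) * |M j k * x k|)
            + R ^ (j : ℕ) * Real.exp (-p j) * |g j| := by rw [mul_add, Finset.mul_sum]
      _ ≤ (∑ k ∈ Finset.univ.erase j, Real.exp (2 * c) * (α / R) * N)
            + R ^ d * Real.exp c * (L * (Real.exp c * N)) := by
          refine add_le_add (Finset.sum_le_sum hterm) ?_
          exact mul_le_mul (mul_le_mul (hpow j) (hexp j) (by positivity) (by positivity)) hgj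
            (abs_nonneg _) (by positivity)
      _ ≤ (∑ k : Fin d, Real.exp (2 * c) * (α / R) * N)
            + R ^ d * Real.exp c * (L * (Real.exp c * N)) := by
          gcongr
          exact Finset.erase_subset _ _
      _ = _ := by
          simp only [Finset.sum_const, Finset.card_univ, Fintype.card_fin, nsmul_eq_mul]
          rw [hcc]; ring
  calc _ ≤ ∑ j : Fin d, 2 * N * (Real.exp (2 * c) * (d * α / R + R ^ d * L) * N) := by
        refine Finset.sum_le_sum fun j _ => ?_
        refine (le_abs_self _).trans ?_
        rw [abs_mul, abs_mul 2, abs_two]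
        have h1 : |R ^ (j : ℕ) * Real.exp (-p j) * x j| ≤ N := by
          rw [abs_mul, abs_of_pos (by positivity)]; exact hv j
        gcongr
        exact hrate j
    _ = _ := by
        simp only [Finset.sum_const, Finset.card_univ, Fintype.card_fin, nsmul_eq_mul]
        rw [← hNS]; ring

/-- Over a window, the energy in the weighted coordinates `R ^ j * exp (-p j t) * x j`, where `p j`
is a primitive of the `j`-th diagonal entry, grows at most at the rate of `weighted_rate_le`. -/
lemma weighted_energy_le {d : ℕ} {M : ℝ → Matrix (Fin d) (Fin d) ℝ}
    {x G : ℝ → EuclideanSpace ℝ (Fin d)} {p : Fin d → ℝ → ℝ} {τ : ℕ → ℝ} (hτ : StrictMono τ)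
    {m n : ℕ} (hmn : m ≤ n) {α c R L : ℝ} (hR : 1 ≤ R) (hL : 0 ≤ L)
    (hM : ∀ t ∈ Ioo (τ m) (τ n), (M t).BlockTriangular (id : Fin d → Fin d))
    (hα : ∀ t ∈ Ioo (τ m) (τ n), ∀ j k, |M t j k| ≤ α)
    (hG : ∀ t ∈ Ioo (τ m) (τ n), ‖G t‖ ≤ L * ‖x t‖)
    (hpc : ∀ j, ContinuousOn (p j) (Icc (τ m) (τ n)))
    (hpb : ∀ j, ∀ t ∈ Icc (τ m) (τ n), |p j t| ≤ c)
    (hpd : ∀ t ∈ Ioo (τ m) (τ n), (∀ k, t ≠ τ k) → ∀ j, HasDerivAt (p j) (M t j j) t)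
    (hxc : ContinuousOn x (Icc (τ m) (τ n)))
    (hxd : ∀ t ∈ Ioo (τ m) (τ n), (∀ k, t ≠ τ k) →
      HasDerivAt x (mulVecE (M t) (x t) + G t) t)
    {t : ℝ} (ht : t ∈ Icc (τ m) (τ n)) :
    ∑ j : Fin d, (R ^ (j : ℕ) * Real.exp (-p j t) * x t j) ^ 2 ≤
      Real.exp (2 * (d * Real.exp (2 * c) * (d * α / R + R ^ d * L)) * (t - τ m)) *
        ∑ j : Fin d, (R ^ (j : ℕ) * Real.exp (-p j (τ m)) * x (τ m) j) ^ 2 := by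
  set κ := d * Real.exp (2 * c) * (d * α / R + R ^ d * L)
  let V : ℝ → ℝ := fun t => ∑ j : Fin d, (R ^ (j : ℕ) * Real.exp (-p j t) * x t j) ^ 2
  have hcoord : ∀ j : Fin d, ContinuousOn (fun t => x t j) (Icc (τ m) (τ n)) := fun j =>
    (EuclideanSpace.proj (𝕜 := ℝ) j).continuous.comp_continuousOn hxc
  have hVc : ContinuousOn V (Icc (τ m) (τ n)) :=
    continuousOn_finsetSum _ fun j _ =>
      ((continuousOn_const.mul (hpc j).neg.rexp).mul (hcoord j)).pow 2
  have hanti : AntitoneOn (fun t => Real.exp (-(2 * κ * t)) * V t) (Icc (τ m) (τ n)) := by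
    refine antitoneOn_Icc_of_hasDerivAt_nonpos_off_seq hτ hmn ?_ fun t ht hoff => ?_
    · exact (Continuous.continuousOn (by fun_prop)).mul hVc
    have hxj : ∀ j : Fin d, HasDerivAt (fun t => x t j) ((∑ k, M t j k * x t k) + G t j) t :=
      fun j => (EuclideanSpace.proj (𝕜 := ℝ) j).hasFDerivAt.comp_hasDerivAt t (hxd t ht hoff)
    have hV : HasDerivAt V (∑ j : Fin d, 2 * (R ^ (j : ℕ) * Real.exp (-p j t) * x t j) *
        (R ^ (j : ℕ) * Real.exp (-p j t) *
          ((∑ k, M t j k * x t k) + G t j - M t j j * x t j))) t := by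
      refine HasDerivAt.fun_sum fun j _ => ?_
      have h1 := ((((hpd t ht hoff j).neg.exp).const_mul (R ^ (j : ℕ))).mul (hxj j)).pow 2
      refine h1.congr_deriv ?_
      simp only [Pi.mul_apply, Pi.neg_apply]
      push_cast
      ring
    have hE : HasDerivAt (fun t => Real.exp (-(2 * κ * t)))
        (Real.exp (-(2 * κ * t)) * (-(2 * κ * 1))) t :=
      (((hasDerivAt_id t).const_mul (2 * κ)).neg).exp
    refine ⟨_, hE.mul hV, ?_⟩
    have h2 := weighted_rate_le (hM t ht) (hα t ht) hR hL
      (fun j => hpb j t (Ioo_subset_Icc_self ht)) (hG t ht)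
    have h3 : ∀ a e v D : ℝ, 0 ≤ e → D ≤ a * v → e * (-(a * 1)) * v + e * D ≤ 0 := by
      intro a e v D he hD
      nlinarith [mul_le_mul_of_nonneg_left hD he]
    exact h3 _ _ _ _ (Real.exp_pos _).le h2
  have h1 := hanti (left_mem_Icc.2 (hτ.monotone hmn)) ht ht.1
  have h2 : V t ≤ Real.exp (2 * κ * t) * (Real.exp (-(2 * κ * τ m)) * V (τ m)) := by
    have h3 := mul_le_mul_of_nonneg_left h1 (Real.exp_pos (2 * κ * t)).le
    simp only [← mul_assoc, ← Real.exp_add, add_neg_cancel, Real.exp_zero, one_mul] at h3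
    simpa only [← mul_assoc, ← Real.exp_add] using h3
  refine h2.trans_eq ?_
  rw [← mul_assoc, ← Real.exp_add]
  congr 2
  ring

/-- A trajectory whose velocity is at most `β` times its norm decays at most at the rate `β`. -/
lemma norm_sq_le_exp_mul_norm_sq {E : Type*} [NormedAddCommGroup E] [InnerProductSpace ℝ E]
    {x : ℝ → E} {τ : ℕ → ℝ} (hτ : StrictMono τ) {n : ℕ} {β : ℝ}
    (hxc : ContinuousOn x (Icc (τ 0) (τ n)))
    (hxd : ∀ t ∈ Ioo (τ 0) (τ n), (∀ k, t ≠ τ k) →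
      ∃ x', HasDerivAt x x' t ∧ ‖x'‖ ≤ β * ‖x t‖)
    {t : ℝ} (ht : t ∈ Icc (τ 0) (τ n)) :
    Real.exp (2 * β * τ 0) * ‖x (τ 0)‖ ^ 2 ≤ Real.exp (2 * β * t) * ‖x t‖ ^ 2 := by
  have hanti : AntitoneOn (fun t => -(Real.exp (2 * β * t) * ‖x t‖ ^ 2))
      (Icc (τ 0) (τ n)) := by
    refine antitoneOn_Icc_of_hasDerivAt_nonpos_off_seq hτ n.zero_le ?_ fun t ht hoff => ?_
    · exact ((Continuous.continuousOn (by fun_prop)).mul (hxc.norm.pow 2)).neg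
    obtain ⟨x', hx', hb⟩ := hxd t ht hoff
    have hE : HasDerivAt (fun t => Real.exp (2 * β * t))
        (Real.exp (2 * β * t) * (2 * β * 1)) t :=
      ((hasDerivAt_id t).const_mul (2 * β)).exp
    refine ⟨_, (hE.mul hx'.norm_sq).neg, ?_⟩
    have h1 : -(‖x t‖ * (β * ‖x t‖)) ≤ inner ℝ (x t) x' := by
      have h2 := (abs_le.1 (abs_real_inner_le_norm (x t) x')).1
      have h3 := mul_le_mul_of_nonneg_left hb (norm_nonneg (x t))
      linarith
    nlinarith [mul_le_mul_of_nonneg_left h1 (Real.exp_pos (2 * β * t)).le]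
  have h1 := hanti (left_mem_Icc.2 (ht.1.trans ht.2)) ht ht.1
  simpa using h1

section Primitive

variable {τ : ℕ → ℝ} {f : ℝ → ℝ} {α : ℝ}

lemma intervalIntegrable_of_continuousOn_pieces (hτ : StrictMono τ) (hτ0 : τ 0 = 0)
    (hb : ∀ t > 0, |f t| ≤ α) (hf : ∀ n, ContinuousOn f (Ioc (τ n) (τ (n + 1)))) (m n : ℕ) :
    IntervalIntegrable f volume (τ m) (τ n) := by
  have h0 : ∀ n, IntervalIntegrable f volume (τ 0) (τ n) := fun n =>
    IntervalIntegrable.trans_iterate fun k _ => by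
      rw [intervalIntegrable_iff_integrableOn_Ioc_of_le (hτ k.lt_succ_self).le]
      refine IntegrableOn.of_bound (by simp) ((hf k).aestronglyMeasurable measurableSet_Ioc) α ?_
      refine (ae_restrict_iff' measurableSet_Ioc).2 (Eventually.of_forall fun t ht => ?_)
      refine hb t (lt_of_le_of_lt ?_ ht.1)
      rw [← hτ0]
      exact hτ.monotone k.zero_le
  exact (h0 m).symm.trans (h0 n)

lemma hasDerivAt_primitive_of_continuousOn_pieces (hτ : StrictMono τ) (hτ0 : τ 0 = 0)
    (hτtop : Tendsto τ atTop atTop) (hb : ∀ t > 0, |f t| ≤ α)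
    (hf : ∀ n, ContinuousOn f (Ioc (τ n) (τ (n + 1)))) (m : ℕ) {t : ℝ} (hmt : τ m < t)
    (hoff : ∀ k, t ≠ τ k) : HasDerivAt (fun s => ∫ r in (τ m)..s, f r) (f t) t := by
  have ht0 : τ 0 < t := (hτ.monotone m.zero_le).trans_lt hmt
  obtain ⟨n, hn⟩ := hτ.exists_between_of_tendsto_atTop hτtop ht0
  have hc : ContinuousOn f (Ioo (τ n) (τ (n + 1))) := (hf n).mono Ioo_subset_Ioc_self
  have htn : t ∈ Ioo (τ n) (τ (n + 1)) := ⟨hn.1, lt_of_le_of_ne hn.2 (hoff _)⟩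
  refine intervalIntegral.integral_hasDerivAt_right ?_
    (hc.stronglyMeasurableAtFilter isOpen_Ioo t htn) (hc.continuousAt (isOpen_Ioo.mem_nhds htn))
  have hmn : τ m < τ (n + 1) := hmt.trans htn.2
  refine (intervalIntegrable_of_continuousOn_pieces hτ hτ0 hb hf m (n + 1)).mono_set ?_
  rw [uIcc_of_le hmt.le, uIcc_of_le hmn.le]
  exact Icc_subset_Icc_right hn.2

end Primitive

section Window

variable {d : ℕ} {M : ℝ → Matrix (Fin d) (Fin d) ℝ} {x G : ℝ → EuclideanSpace ℝ (Fin d)}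
  {τ : ℕ → ℝ} {α R L : ℝ}

lemma abs_integral_diag_le (hτ0 : τ 0 = 0) (hτ : StrictMono τ)
    (hα : ∀ t > 0, ∀ j k, |M t j k| ≤ α) (m : ℕ) {t : ℝ} (ht : τ m ≤ t) (j : Fin d) :
    |∫ r in (τ m)..t, M r j j| ≤ α * (t - τ m) := by
  have h := intervalIntegral.norm_integral_le_of_norm_le_const (a := τ m) (b := t) (C := α)
    (f := fun r => M r j j) fun r hr => by
      rw [uIoc_of_le ht] at hr
      refine hα r (lt_of_le_of_lt ?_ hr.1) j j
      rw [← hτ0]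
      exact hτ.monotone m.zero_le
  rwa [abs_of_nonneg (sub_nonneg.2 ht), Real.norm_eq_abs] at h

lemma weighted_energy_window_le (hτ0 : τ 0 = 0) (hτ : StrictMono τ)
    (hτtop : Tendsto τ atTop atTop) (hα0 : 0 ≤ α) (hR : 1 ≤ R) (hL : 0 ≤ L)
    (hM : ∀ t > 0, (M t).BlockTriangular (id : Fin d → Fin d))
    (hα : ∀ t > 0, ∀ j k, |M t j k| ≤ α)
    (hMc : ∀ j n, ContinuousOn (fun t => M t j j) (Ioc (τ n) (τ (n + 1))))
    (hG : ∀ t > 0, ‖G t‖ ≤ L * ‖x t‖) (hxc : ContinuousOn x (Ici 0))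
    (hxd : ∀ t > 0, (∀ k, t ≠ τ k) → HasDerivAt x (mulVecE (M t) (x t) + G t) t)
    {m n : ℕ} (hmn : m ≤ n) {W : ℝ} (hW : τ n - τ m ≤ W) {t : ℝ} (ht : t ∈ Icc (τ m) (τ n)) :
    ∑ j : Fin d, (R ^ (j : ℕ) * Real.exp (-∫ r in (τ m)..t, M r j j) * x t j) ^ 2 ≤
      Real.exp (2 * (d * Real.exp (2 * (α * W)) * (d * α / R + R ^ d * L)) * (t - τ m)) *
        ∑ j : Fin d, (R ^ (j : ℕ) * x (τ m) j) ^ 2 := by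
  have hm0 : 0 ≤ τ m := by rw [← hτ0]; exact hτ.monotone m.zero_le
  have hpos : ∀ t ∈ Ioo (τ m) (τ n), 0 < t := fun t ht => hm0.trans_lt ht.1
  have h := weighted_energy_le (p := fun j t => ∫ r in (τ m)..t, M r j j) hτ hmn
    (c := α * W) hR hL (fun t ht => hM t (hpos t ht)) (fun t ht => hα t (hpos t ht))
    (fun t ht => hG t (hpos t ht)) (fun j => ?_) (fun j t ht => ?_)
    (fun t ht hoff j => hasDerivAt_primitive_of_continuousOn_pieces hτ hτ0 hτtop
      (fun t ht => hα t ht j j) (hMc j) m ht.1 hoff)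
    (hxc.mono fun t ht => hm0.trans ht.1) (fun t ht => hxd t (hpos t ht)) ht
  · simpa using h
  · have h1 := intervalIntegrable_of_continuousOn_pieces hτ hτ0
      (fun t ht => hα t ht j j) (hMc j) m n
    have h2 := intervalIntegral.continuousOn_primitive_interval'
      h1 (left_mem_uIcc)
    rwa [uIcc_of_le (hτ.monotone hmn)] at h2
  · refine (abs_integral_diag_le hτ0 hτ hα m ht.1 j).trans ?_
    gcongr
    linarith [ht.2]

lemma weighted_energy_window_end_le (hτ0 : τ 0 = 0) (hτ : StrictMono τ)
    (hτtop : Tendsto τ atTop atTop) (hα0 : 0 ≤ α) (hR : 1 ≤ R) (hL : 0 ≤ L)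
    (hM : ∀ t > 0, (M t).BlockTriangular (id : Fin d → Fin d))
    (hα : ∀ t > 0, ∀ j k, |M t j k| ≤ α)
    (hMc : ∀ j n, ContinuousOn (fun t => M t j j) (Ioc (τ n) (τ (n + 1))))
    (hG : ∀ t > 0, ‖G t‖ ≤ L * ‖x t‖) (hxc : ContinuousOn x (Ici 0))
    (hxd : ∀ t > 0, (∀ k, t ≠ τ k) → HasDerivAt x (mulVecE (M t) (x t) + G t) t)
    {m n : ℕ} (hmn : m ≤ n) {W : ℝ} (hW : τ n - τ m ≤ W) :
    ∑ j : Fin d, (R ^ (j : ℕ) * x (τ n) j) ^ 2 ≤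
      Real.exp (2 * (⨆ j, ∫ r in (τ m)..(τ n), M r j j) +
        2 * (d * Real.exp (2 * (α * W)) * (d * α / R + R ^ d * L)) * (τ n - τ m)) *
        ∑ j : Fin d, (R ^ (j : ℕ) * x (τ m) j) ^ 2 := by
  have h := weighted_energy_window_le hτ0 hτ hτtop hα0 hR hL hM hα hMc hG hxc hxd hmn hW
    (right_mem_Icc.2 (hτ.monotone hmn))
  set s := ⨆ j, ∫ r in (τ m)..(τ n), M r j j with hs
  rw [Real.exp_add, mul_assoc]
  refine le_trans ?_ (mul_le_mul_of_nonneg_left h (Real.exp_pos _).le)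
  rw [Finset.mul_sum]
  refine Finset.sum_le_sum fun j _ => ?_
  have hj : (∫ r in (τ m)..(τ n), M r j j) ≤ s :=
    le_ciSup (f := fun j => ∫ r in (τ m)..(τ n), M r j j) (finite_range _).bddAbove j
  have e1 : Real.exp (2 * s) *
      (R ^ (j : ℕ) * Real.exp (-∫ r in (τ m)..(τ n), M r j j) * x (τ n) j) ^ 2 =
      Real.exp (2 * s + 2 * -∫ r in (τ m)..(τ n), M r j j) *
        (R ^ (j : ℕ) * x (τ n) j) ^ 2 := by
    rw [Real.exp_add, two_mul (-_), Real.exp_add]; ring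
  rw [e1]
  exact le_mul_of_one_le_left (sq_nonneg _) (Real.one_le_exp (by linarith))

lemma norm_sq_le_weighted_energy (hτ0 : τ 0 = 0) (hτ : StrictMono τ)
    (hτtop : Tendsto τ atTop atTop) (hα0 : 0 ≤ α) (hR : 1 ≤ R) (hL : 0 ≤ L)
    (hM : ∀ t > 0, (M t).BlockTriangular (id : Fin d → Fin d))
    (hα : ∀ t > 0, ∀ j k, |M t j k| ≤ α)
    (hMc : ∀ j n, ContinuousOn (fun t => M t j j) (Ioc (τ n) (τ (n + 1))))
    (hG : ∀ t > 0, ‖G t‖ ≤ L * ‖x t‖) (hxc : ContinuousOn x (Ici 0))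
    (hxd : ∀ t > 0, (∀ k, t ≠ τ k) → HasDerivAt x (mulVecE (M t) (x t) + G t) t)
    {m n : ℕ} (hmn : m ≤ n) {W : ℝ} (hW : τ n - τ m ≤ W) {t : ℝ} (ht : t ∈ Icc (τ m) (τ n)) :
    ‖x t‖ ^ 2 ≤
      Real.exp (2 * (α * W) +
        2 * (d * Real.exp (2 * (α * W)) * (d * α / R + R ^ d * L)) * W) *
        ∑ j : Fin d, (R ^ (j : ℕ) * x (τ m) j) ^ 2 := by
  have hR0 : 0 < R := by linarith
  have h := weighted_energy_window_le hτ0 hτ hτtop hα0 hR hL hM hα hMc hG hxc hxd hmn hW ht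
  have htW : t - τ m ≤ W := by linarith [ht.2]
  rw [Real.exp_add, mul_assoc]
  have h' : ∑ j : Fin d, (R ^ (j : ℕ) * Real.exp (-∫ r in (τ m)..t, M r j j) * x t j) ^ 2 ≤
      Real.exp (2 * (d * Real.exp (2 * (α * W)) * (d * α / R + R ^ d * L)) * W) *
        ∑ j : Fin d, (R ^ (j : ℕ) * x (τ m) j) ^ 2 := by
    refine h.trans ?_
    gcongr
  refine le_trans ?_ (mul_le_mul_of_nonneg_left h' (Real.exp_pos _).le)
  rw [Finset.mul_sum, EuclideanSpace.real_norm_sq_eq]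
  refine Finset.sum_le_sum fun j _ => ?_
  have hj : (∫ r in (τ m)..t, M r j j) ≤ α * W :=
    (le_abs_self _).trans ((abs_integral_diag_le hτ0 hτ hα m ht.1 j).trans (by gcongr))
  have e1 : Real.exp (2 * (α * W)) *
      (R ^ (j : ℕ) * Real.exp (-∫ r in (τ m)..t, M r j j) * x t j) ^ 2 =
      (R ^ (j : ℕ)) ^ 2 * Real.exp (2 * (α * W) + 2 * -∫ r in (τ m)..t, M r j j) *
        (x t j) ^ 2 := by
    rw [Real.exp_add, two_mul (-_), Real.exp_add]; ring
  rw [e1]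
  refine le_mul_of_one_le_left (sq_nonneg _) ?_
  exact one_le_mul_of_one_le_of_one_le (one_le_pow₀ (one_le_pow₀ hR))
    (Real.one_le_exp (by linarith))

end Window

/-- Exponential decay from window estimates: if the energy `V` at the window ends `T k` is
multiplied by at most `exp (2 * q k + 2 * κ * (T (k + 1) - T k))` and the partial sums of `q` are
eventually below `χ' * T s` with `χ' + κ < 0`, then every quantity dominated by a multiple of the
energy at the start of the current window decays exponentially. -/
lemma eventually_le_exp_of_window_growth {T V q : ℕ → ℝ} {N : ℝ → ℝ} {κ χ' W K : ℝ}
    (hT : StrictMono T) (hT0 : T 0 = 0) (hTtop : Tendsto T atTop atTop)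
    (hTW : ∀ k, T (k + 1) - T k ≤ W) (hV0 : 0 ≤ V 0) (hK : 0 ≤ K)
    (hV : ∀ k, V (k + 1) ≤ Real.exp (2 * q k + 2 * κ * (T (k + 1) - T k)) * V k)
    (hN : ∀ k, ∀ t ∈ Icc (T k) (T (k + 1)), N t ^ 2 ≤ K * V k)
    (hq : ∀ᶠ s in atTop, ∑ k ∈ Finset.range s, q k ≤ χ' * T s) (hκ : χ' + κ < 0) :
    ∀ᶠ t in atTop, N t ≤ Real.exp ((χ' + κ) / 2 * t) := by
  have hVs : ∀ s, V s ≤ Real.exp (2 * ∑ k ∈ Finset.range s, q k + 2 * κ * T s) * V 0 := by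
    intro s
    induction s with
    | zero => simp [hT0]
    | succ s ih =>
      refine (hV s).trans ((mul_le_mul_of_nonneg_left ih (Real.exp_pos _).le).trans_eq ?_)
      rw [← mul_assoc, ← Real.exp_add, Finset.sum_range_succ]
      congr 2
      ring
  obtain ⟨s₀, hs₀⟩ := eventually_atTop.1 hq
  set γ := χ' + κ
  have hlarge : ∀ᶠ t in atTop, K * Real.exp (-(2 * γ * W)) * V 0 ≤ Real.exp (-γ * t) :=
    (Real.tendsto_exp_atTop.comp
      (tendsto_id.const_mul_atTop (by linarith : 0 < -γ))).eventually_ge_atTop _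
  filter_upwards [hlarge, eventually_gt_atTop (T s₀), eventually_gt_atTop (T 0)]
    with t ht1 ht2 ht3
  obtain ⟨s, hs⟩ := hT.exists_between_of_tendsto_atTop hTtop ht3
  have hss : s₀ ≤ s := by
    have := hT.lt_iff_lt.1 (ht2.trans_le hs.2)
    omega
  have h1 : V s ≤ Real.exp (2 * γ * t - 2 * γ * W) * V 0 := by
    refine (hVs s).trans ?_
    have h2 := hs₀ s hss
    have h3 := hTW s
    have h4 : γ * T s ≤ γ * (t - W) :=
      mul_le_mul_of_nonpos_left (by linarith [hs.2]) hκ.le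
    have h5 : γ * T s = χ' * T s + κ * T s := add_mul _ _ _
    gcongr
    nlinarith
  refine le_trans (le_abs_self _) (abs_le_of_sq_le_sq ?_ (Real.exp_pos _).le)
  calc N t ^ 2 ≤ K * V s := hN s t ⟨hs.1.le, hs.2⟩
    _ ≤ K * (Real.exp (2 * γ * t - 2 * γ * W) * V 0) := by gcongr
    _ = Real.exp (2 * γ * t) * (K * Real.exp (-(2 * γ * W)) * V 0) := by
        rw [sub_eq_add_neg, Real.exp_add]; ring
    _ ≤ Real.exp (2 * γ * t) * Real.exp (-γ * t) := by gcongr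
    _ = Real.exp (γ / 2 * t) ^ 2 := by
        rw [← Real.exp_add, ← Real.exp_nat_mul]
        congr 1
        push_cast
        ring

/-- A nonvanishing quantity with exponential lower and upper bounds has a logarithmic growth rate
controlled by the upper bound. -/
lemma limsup_log_div_le_of_exp_bounds {N : ℝ → ℝ} {a β c : ℝ} (ha : 0 < a)
    (hlow : ∀ t, 0 ≤ t → a * Real.exp (-β * t) ≤ N t)
    (hup : ∀ᶠ t in atTop, N t ≤ Real.exp (c * t)) :
    limsup (fun t : ℝ => Real.log (N t) / t) atTop ≤ c := by
  have hpos : ∀ t, 0 ≤ t → 0 < N t := fun t ht => lt_of_lt_of_le (by positivity) (hlow t ht)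
  refine limsup_le_of_le ?_ ?_
  · refine IsBoundedUnder.isCoboundedUnder_le ⟨-|Real.log a| - β, ?_⟩
    refine eventually_map.2 ?_
    filter_upwards [eventually_ge_atTop 1] with t ht
    have ht0 : 0 < t := by linarith
    have h1 := Real.log_le_log (by positivity) (hlow t ht0.le)
    rw [Real.log_mul ha.ne' (Real.exp_pos _).ne', Real.log_exp] at h1
    show _ ≤ _
    rw [le_div_iff₀ ht0]
    nlinarith [neg_abs_le (Real.log a), abs_nonneg (Real.log a)]
  · filter_upwards [hup, eventually_gt_atTop 0] with t ht ht0
    rw [div_le_iff₀ ht0]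
    exact (Real.log_le_iff_le_exp (hpos t ht0.le)).2 ht

end

/-- upper-triangular case of the stability theorem.  If the Liao-type
exponent of the linear switched system is negative, there is `δ > 0` such that every
perturbation of linear growth with constant `L < δ` yields a globally asymptotically
exponentially stable quasi-linear switched system (negative upper Lyapunov exponent
for every solution). -/
theorem stmt1
    {d : ℕ} (hd : 2 ≤ d) {I : Type*}
    (A : I → ℝ → Matrix (Fin d) (Fin d) ℝ)
    (α Tstar : ℝ) (hα : 0 < α) (hT : 0 < Tstar)
    (hAcont : ∀ i, ContinuousOn (A i) (Set.Ioi (0:ℝ)))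
    (hAnorm : ∀ i, ∀ t > (0:ℝ), ∀ v : EuclideanSpace ℝ (Fin d),
      ‖mulVecE (A i t) v‖ ≤ α * ‖v‖)
    (hAtri : ∀ i, ∀ t > (0:ℝ), (A i t).BlockTriangular (id : Fin d → Fin d))
    (τ : ℕ → ℝ) (hτ0 : τ 0 = 0) (hτmono : StrictMono τ)
    (hτtop : Filter.Tendsto τ Filter.atTop Filter.atTop)
    (hτgap : ∀ n : ℕ, τ (n+1) - τ n ≤ Tstar)
    (σ : ℕ → I) (u : ℝ → I)
    (hu : ∀ n : ℕ, ∀ t ∈ Set.Ioc (τ n) (τ (n+1)), u t = σ (n+1))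
    (Δ : ℕ) (hΔ : 0 < Δ)
    (nseq : ℕ → ℕ) (hn0 : nseq 0 = 0) (hnmono : StrictMono nseq)
    (hngap : ∀ s : ℕ, nseq (s+1) - nseq s ≤ Δ)
    (χ : ℝ)
    (hχ : χ = Filter.limsup (fun s : ℕ =>
        (τ (nseq s))⁻¹ * ∑ k ∈ Finset.range s, ⨆ j : Fin d,
          ∫ t in (τ (nseq k))..(τ (nseq (k+1))), A (u t) t j j) Filter.atTop)
    (hχneg : χ < 0) :
    ∃ δ > (0:ℝ),
      ∀ (F : I → ℝ → EuclideanSpace ℝ (Fin d) → EuclideanSpace ℝ (Fin d)),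
        (∀ i, ContinuousOn (Function.uncurry (F i))
          ((Set.Ioi (0:ℝ)) ×ˢ (Set.univ : Set (EuclideanSpace ℝ (Fin d))))) →
        ∀ L : ℝ, 0 ≤ L → L < δ →
        (∀ i, ∀ t > (0:ℝ), ∀ v : EuclideanSpace ℝ (Fin d), ‖F i t v‖ ≤ L * ‖v‖) →
        ∀ (x : ℝ → EuclideanSpace ℝ (Fin d)) (x₀ : EuclideanSpace ℝ (Fin d)),
          x 0 = x₀ →
          ContinuousOn x (Set.Ici (0:ℝ)) →
          (∀ t > (0:ℝ), (∀ n : ℕ, t ≠ τ n) →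
            HasDerivAt x (mulVecE (A (u t) t) (x t) + F (u t) t (x t)) t) →
          (x₀ ≠ 0 → Filter.limsup (fun t : ℝ => Real.log ‖x t‖ / t) Filter.atTop < 0)
          ∧ ∃ c < (0:ℝ), ∀ᶠ t : ℝ in Filter.atTop, ‖x t‖ ≤ Real.exp (c * t) := by
  have hd0 : (0:ℝ) < d := by exact_mod_cast (by omega : 0 < d)
  have : Nonempty (Fin d) := ⟨⟨0, by omega⟩⟩
  have hτnn : ∀ n, 0 ≤ τ n := fun n => by rw [← hτ0]; exact hτmono.monotone n.zero_le
  set W : ℝ := Δ * Tstar with hW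
  have hgap : ∀ k, τ (nseq (k + 1)) - τ (nseq k) ≤ W := by
    intro k
    have h1 : ∀ m l : ℕ, τ (m + l) - τ m ≤ l * Tstar := by
      intro m l
      induction l with
      | zero => simp
      | succ l ih =>
        have := hτgap (m + l)
        push_cast
        rw [← add_assoc]
        linarith
    have h2 := h1 (nseq k) (nseq (k + 1) - nseq k)
    rw [Nat.add_sub_cancel' (hnmono k.lt_succ_self).le] at h2
    refine h2.trans ?_
    have : ((nseq (k + 1) - nseq k : ℕ) : ℝ) ≤ Δ := by exact_mod_cast hngap k
    rw [hW]
    gcongr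
  have hMtri : ∀ t > 0, (A (u t) t).BlockTriangular (id : Fin d → Fin d) :=
    fun t ht => hAtri _ t ht
  have hMα : ∀ t > 0, ∀ j k, |A (u t) t j k| ≤ α :=
    fun t ht => abs_entry_le_of_norm_mulVecE_le (hAnorm _ t ht)
  have hMc : ∀ (j : Fin d) n, ContinuousOn (fun t => A (u t) t j j)
      (Set.Ioc (τ n) (τ (n + 1))) := by
    intro j n
    have h1 : ContinuousOn (fun t => A (σ (n + 1)) t j j) (Set.Ioc (τ n) (τ (n + 1))) :=
      ((continuous_id.matrix_elem j j).comp_continuousOn (hAcont (σ (n + 1)))).mono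
        fun t ht => (hτnn n).trans_lt ht.1
    exact h1.congr fun t ht => by simp only [hu n t ht]
  have hTmono : StrictMono (fun k => τ (nseq k)) := hτmono.comp hnmono
  have hT0 : τ (nseq 0) = 0 := by rw [hn0, hτ0]
  have hTtop : Filter.Tendsto (fun k => τ (nseq k)) Filter.atTop Filter.atTop :=
    hτtop.comp hnmono.tendsto_atTop
  set q : ℕ → ℝ := fun k => ⨆ j : Fin d,
    ∫ t in (τ (nseq k))..(τ (nseq (k+1))), A (u t) t j j with hq
  have hqle : ∀ s, ∑ k ∈ Finset.range s, q k ≤ α * τ (nseq s) := by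
    intro s
    have h1 : ∀ k, q k ≤ α * (τ (nseq (k + 1)) - τ (nseq k)) := fun k => ciSup_le fun j =>
      (le_abs_self _).trans (abs_integral_diag_le hτ0 hτmono hMα _ (hTmono k.lt_succ_self).le j)
    calc _ ≤ ∑ k ∈ Finset.range s, α * (τ (nseq (k + 1)) - τ (nseq k)) :=
          Finset.sum_le_sum fun k _ => h1 k
      _ = _ := by
          rw [← Finset.mul_sum, Finset.sum_range_sub (fun k => τ (nseq k)), hT0, sub_zero]
  have hqev : ∀ᶠ s in Filter.atTop, ∑ k ∈ Finset.range s, q k ≤ χ / 2 * τ (nseq s) := by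
    have h1 : ∀ᶠ s in Filter.atTop,
        (τ (nseq s))⁻¹ * ∑ k ∈ Finset.range s, q k < χ / 2 := by
      refine Filter.eventually_lt_of_limsup_lt (by rw [← hχ]; linarith) ?_
      refine Filter.isBoundedUnder_of ⟨α, fun s => ?_⟩
      refine inv_mul_le_of_le_mul₀ (hτnn _) hα.le ?_
      rw [mul_comm]
      exact hqle s
    filter_upwards [h1, Filter.eventually_gt_atTop 0] with s hs hs0
    have hpos : 0 < τ (nseq s) := by rw [← hT0]; exact hTmono hs0
    rw [inv_mul_lt_iff₀ hpos] at hs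
    linarith
  set D : ℝ := d * Real.exp (2 * (α * W))
  have hDpos : 0 < D := by positivity
  set R : ℝ := 1 + 8 * D * (d * α) / (-χ) with hR
  have hχ' : 0 < -χ := by linarith
  have hR1 : 1 ≤ R := by
    have : 0 ≤ 8 * D * (d * α) / (-χ) := by positivity
    linarith
  have hR0 : 0 < R := by linarith
  have hDR : D * (d * α / R) ≤ -χ / 8 := by
    rw [← mul_div_assoc, div_le_iff₀ hR0]
    have : -χ / 8 * R = -χ / 8 + D * (d * α) := by
      have h1 : (-χ) * (8 * D * (d * α) / (-χ)) = 8 * D * (d * α) := mul_div_cancel₀ _ hχ'.ne'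
      rw [hR]
      linarith
    linarith
  refine ⟨-χ / (8 * (D * R ^ d)), by positivity, ?_⟩
  intro F _ L hL0 hLδ hF x x₀ hx0 hxc hxd
  have hDL : D * (R ^ d * L) < -χ / 8 := by
    rw [lt_div_iff₀ (by positivity)] at hLδ
    linarith
  set κ : ℝ := D * (d * α / R + R ^ d * L) with hκ
  have hκlt : χ / 2 + κ < 0 := by rw [hκ, mul_add]; linarith
  have hG : ∀ t > 0, ‖F (u t) t (x t)‖ ≤ L * ‖x t‖ := fun t ht => hF _ t ht _
  have hle : ∀ k, nseq k ≤ nseq (k + 1) := fun k => (hnmono k.lt_succ_self).le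
  have hdecay := eventually_le_exp_of_window_growth (N := fun t => ‖x t‖) (q := q) (κ := κ)
    (V := fun k => ∑ j : Fin d, (R ^ (j : ℕ) * x (τ (nseq k)) j) ^ 2)
    (K := Real.exp (2 * (α * W) + 2 * κ * W))
    hTmono hT0 hTtop hgap (Finset.sum_nonneg fun j _ => sq_nonneg _) (Real.exp_pos _).le
    (fun k => weighted_energy_window_end_le hτ0 hτmono hτtop hα.le hR1 hL0 hMtri hMα hMc hG
      hxc hxd (hle k) (hgap k))
    (fun k t ht => norm_sq_le_weighted_energy hτ0 hτmono hτtop hα.le hR1 hL0 hMtri hMα hMc hG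
      hxc hxd (hle k) (hgap k) ht) hqev hκlt
  have hneg : (χ / 2 + κ) / 2 < 0 := by linarith
  refine ⟨fun hx₀ => ?_, _, hneg, hdecay⟩
  refine (limsup_log_div_le_of_exp_bounds (norm_pos_iff.2 hx₀) (β := α + L) (fun t ht => ?_)
    hdecay).trans_lt hneg
  obtain ⟨n, hn⟩ := (hτtop.eventually_ge_atTop t).exists
  have h1 := norm_sq_le_exp_mul_norm_sq (β := α + L) hτmono (n := n)
    (hxc.mono fun t ht => by rw [hτ0] at ht; exact ht.1)
    (fun t ht hoff => by
      rw [hτ0] at ht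
      refine ⟨_, hxd t ht.1 hoff, (norm_add_le _ _).trans ?_⟩
      rw [add_mul]
      exact add_le_add (hAnorm _ t ht.1 _) (hG t ht.1))
    (t := t) ⟨by rwa [hτ0], hn⟩
  rw [hτ0, mul_zero, Real.exp_zero, one_mul, hx0] at h1
  refine (abs_le_of_sq_le_sq' ?_ (norm_nonneg _)).2
  rw [mul_pow, ← Real.exp_nat_mul]
  have h2 := mul_le_mul_of_nonneg_right h1 (Real.exp_pos (-(2 * (α + L) * t))).le
  rw [mul_right_comm (Real.exp _), ← Real.exp_add, add_neg_cancel, Real.exp_zero, one_mul] at h2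
  refine le_of_eq_of_le ?_ h2
  congr 2
  push_cast
  ring
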